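/- Let Ω be a (3,10,40)-graph with diam(Ω) = 2. Then the vertex connectivity of Ω is at least 6; that is, for every set S of at most 5 vertices, the graph obtained from Ω by deleting the vertices of S remains connected. -/

import Mathlib

/-!
Let `A`, `B` be the sides of a separation by a cut set `S` with `#A ≤ #B` and `#S ≤ c`, and let no
independent set have more than `k` vertices. As the diameter is at most two, the set `T ⊆ S` of
neighbours in `S` of any `a ∈ A` dominates `B`. Each `t ∈ T` has at most `k - 1` neighbours in `B`,
since these form an independent set together with `a`. Adjacent vertices of `A` would have disjoint
such sets `T`, one of which is too small to dominate `B`; hence `A` is independent.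

Now count the pairs `t ∈ T`, `b ∈ B` with `t` adjacent to `b`, counting a pair twice when `t` is the
only neighbour of `b` in `T`, so that every `b` contributes at least two. The neighbours of `t` in
`B` are independent together with `A`, hence number at most `k - #A`. The private ones are
independent together with `T \ {t}`, hence number at most `k + 1 - #T`. Thus
`2 * #B ≤ #T * (2 * k + 1 - #A - #T)`, which bounds the number of vertices.
-/

open Finset

variable {V : Type*} {G : SimpleGraph V}

lemma exists_adj_adj_of_ediam_le_two (h : G.ediam ≤ 2) {u v : V} (hne : u ≠ v)
    (hadj : ¬G.Adj u v) : ∃ w, G.Adj u w ∧ G.Adj v w := by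
  by_contra hw
  refine (SimpleGraph.edist_le_ediam.trans h).not_gt
    (SimpleGraph.two_lt_edist_iff.mpr ⟨hne, hadj, ?_⟩)
  exact Set.eq_empty_of_forall_notMem fun w hw' ↦ hw ⟨w, hw'⟩

lemma exists_set_not_adj_of_not_preconnected (h : ¬G.Preconnected) :
    ∃ s : Set V, s.Nonempty ∧ sᶜ.Nonempty ∧ ∀ u ∈ s, ∀ v ∉ s, ¬G.Adj u v := by
  simp only [SimpleGraph.Preconnected, not_forall] at h
  obtain ⟨u, v, huv⟩ := h
  exact ⟨{w | G.Reachable u w}, ⟨u, .refl u⟩, ⟨v, huv⟩,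
    fun x hx y hy hxy ↦ hy (hx.trans hxy.reachable)⟩

lemma ediam_eq_diam_of_diam_ne_zero (h : G.diam ≠ 0) : G.ediam = G.diam :=
  (ENat.natCast_toNat (SimpleGraph.ediam_ne_top_of_diam_ne_zero h)).symm

section IndependentSets

lemma indepNum_lt_of_cliqueFree_compl [Finite V] {n : ℕ} (h : Gᶜ.CliqueFree n) :
    G.indepNum < n := by
  obtain ⟨s, hs⟩ := G.exists_isNIndepSet_indepNum
  by_contra! hn
  exact h.mono hn s (G.isNClique_compl.mpr hs)

lemma isIndepSet_of_forall_adj (h3 : G.CliqueFree 3) {v : V} {s : Set V}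
    (hs : ∀ w ∈ s, G.Adj v w) : G.IsIndepSet s :=
  (G.isIndepSet_neighborSet_of_triangleFree h3 v).mono hs

lemma card_add_card_le_indepNum [Finite V] {A B : Finset V} (hA : G.IsIndepSet A)
    (hB : G.IsIndepSet B) (hdisj : Disjoint A B) (hAB : ∀ a ∈ A, ∀ b ∈ B, ¬G.Adj a b) :
    #A + #B ≤ G.indepNum := by
  classical
  have : Std.Symm fun u v ↦ ¬G.Adj u v := ⟨fun _ _ h h' ↦ h h'.symm⟩
  have hunion : G.IsIndepSet (A ∪ B : Finset V) := by
    rw [coe_union, G.isIndepSet_iff, Set.pairwise_union_of_symm]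
    exact ⟨hA, hB, fun a ha b hb _ ↦ hAB a ha b hb⟩
  simpa only [card_union_of_disjoint hdisj] using hunion.card_le_indepNum

lemma card_add_card_filter_adj_le_indepNum [Finite V] [DecidableRel G.Adj] (h3 : G.CliqueFree 3)
    {A B : Finset V} (hA : G.IsIndepSet A) (hdisj : Disjoint A B)
    (hAB : ∀ a ∈ A, ∀ b ∈ B, ¬G.Adj a b) (t : V) :
    #A + #{b ∈ B | G.Adj t b} ≤ G.indepNum :=
  card_add_card_le_indepNum hA
    (isIndepSet_of_forall_adj h3 fun _ hb ↦ (mem_filter.mp hb).2)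
    (disjoint_of_subset_right (filter_subset _ _) hdisj)
    fun a ha b hb ↦ hAB a ha b (mem_filter.mp hb).1

end IndependentSets

section Domination

/-- Every vertex of `B` has a neighbour in `T`; vertices of `T` need not dominate themselves. -/
def Dominates (G : SimpleGraph V) (T B : Finset V) : Prop :=
  ∀ b ∈ B, ∃ t ∈ T, G.Adj t b

/-- The vertex `b` is a private neighbour of `t` relative to `T`: it is adjacent to `t` and to no
other member of `T`. -/
def IsPrivateNeighbor (G : SimpleGraph V) (T : Finset V) (t b : V) : Prop :=
  G.Adj t b ∧ ∀ s ∈ T, G.Adj s b → s = t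

instance [DecidableEq V] [DecidableRel G.Adj] (T : Finset V) (t b : V) :
    Decidable (IsPrivateNeighbor G T t b) :=
  inferInstanceAs (Decidable (_ ∧ _))

variable {T B : Finset V} [DecidableRel G.Adj]

lemma Dominates.card_le_mul {m : ℕ} (h : Dominates G T B)
    (hm : ∀ t ∈ T, #{b ∈ B | G.Adj t b} ≤ m) : #B ≤ #T * m := by
  rw [← mul_one #B]
  refine card_mul_le_card_mul' G.Adj (fun b hb ↦ card_pos.mpr ?_) hm
  obtain ⟨t, ht, htb⟩ := h b hb
  exact ⟨t, mem_bipartiteBelow _ |>.mpr ⟨ht, htb⟩⟩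

variable [DecidableEq V]

lemma Dominates.two_le_card_add_card_isPrivateNeighbor (h : Dominates G T B) {b : V}
    (hb : b ∈ B) : 2 ≤ #{t ∈ T | G.Adj t b} + #{t ∈ T | IsPrivateNeighbor G T t b} := by
  obtain ⟨t, ht, htb⟩ := h b hb
  have ht' : t ∈ ({t ∈ T | G.Adj t b} : Finset V) := mem_filter.mpr ⟨ht, htb⟩
  by_cases hpriv : IsPrivateNeighbor G T t b
  · exact Nat.add_le_add (card_pos.mpr ⟨t, ht'⟩)
      (card_pos.mpr ⟨t, mem_filter.mpr ⟨ht, hpriv⟩⟩)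
  · simp only [IsPrivateNeighbor, htb, true_and, not_forall] at hpriv
    obtain ⟨s, hs, hsb, hne⟩ := hpriv
    exact le_add_right (one_lt_card.mpr ⟨s, mem_filter.mpr ⟨hs, hsb⟩, t, ht', hne⟩)

lemma Dominates.two_mul_card_le_mul {m : ℕ} (h : Dominates G T B)
    (hm : ∀ t ∈ T, #{b ∈ B | G.Adj t b} + #{b ∈ B | IsPrivateNeighbor G T t b} ≤ m) :
    2 * #B ≤ #T * m :=
  calc
    2 * #B ≤ ∑ b ∈ B, (#{t ∈ T | G.Adj t b} + #{t ∈ T | IsPrivateNeighbor G T t b}) := by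
      rw [mul_comm, ← smul_eq_mul]
      exact card_nsmul_le_sum _ _ _ fun b hb ↦ h.two_le_card_add_card_isPrivateNeighbor hb
    _ = ∑ t ∈ T, (#{b ∈ B | G.Adj t b} + #{b ∈ B | IsPrivateNeighbor G T t b}) := by
      rw [sum_add_distrib, sum_add_distrib]
      exact congrArg₂ _ (sum_card_bipartiteAbove_eq_sum_card_bipartiteBelow G.Adj).symm
        (sum_card_bipartiteAbove_eq_sum_card_bipartiteBelow (IsPrivateNeighbor G T)).symm
    _ ≤ #T * m := sum_le_card_nsmul _ _ _ hm

lemma card_isPrivateNeighbor_add_card_le [Finite V] (h3 : G.CliqueFree 3) (hT : G.IsIndepSet T)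
    (B : Finset V) {t : V} (ht : t ∈ T) :
    #{b ∈ B | IsPrivateNeighbor G T t b} + #T ≤ G.indepNum + 1 := by
  have hpriv : ∀ b ∈ ({b ∈ B | IsPrivateNeighbor G T t b} : Finset V),
      IsPrivateNeighbor G T t b := fun b hb ↦ (mem_filter.mp hb).2
  have hle : #{b ∈ B | IsPrivateNeighbor G T t b} + #(T.erase t) ≤ G.indepNum := by
    refine card_add_card_le_indepNum
      (isIndepSet_of_forall_adj h3 fun b hb ↦ (hpriv b hb).1)
      (hT.mono (coe_subset.mpr (erase_subset t T))) ?_ ?_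
    · refine disjoint_left.mpr fun b hb hbT ↦ ?_
      exact hT ht (mem_of_mem_erase hbT) (ne_of_mem_erase hbT).symm (hpriv b hb).1
    · intro b hb s hs hbs
      exact ne_of_mem_erase hs ((hpriv b hb).2 s (mem_of_mem_erase hs) hbs.symm)
  rw [← card_erase_add_one ht]
  lia

end Domination

lemma mul_two_mul_sub_le_mul_two_mul_sub {s t m n : ℕ} (hst : s ≤ t) (hmn : m ≤ n) (htn : t ≤ n) :
    s * (2 * m - s) ≤ t * (2 * n - t) := by
  obtain ⟨d, rfl⟩ := Nat.exists_eq_add_of_le hst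
  obtain ⟨e, rfl⟩ := Nat.exists_eq_add_of_le htn
  calc
    s * (2 * m - s) ≤ s * (s + 2 * d + 2 * e) := by gcongr; lia
    _ ≤ (s + d) * (s + d + 2 * e) := by nlinarith
    _ = (s + d) * (2 * (s + d + e) - (s + d)) := by congr 1; lia

section Separations

variable [Fintype V] [DecidableEq V]

/-- The vertex set `S` separates `A` from `B`: the complement of `S` is the disjoint union of the
nonempty sets `A` and `B`, with no edge between them. -/
structure IsSeparation (G : SimpleGraph V) (S A B : Finset V) : Prop where
  left_nonempty : A.Nonempty
  right_nonempty : B.Nonempty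
  disjoint : Disjoint A B
  union_eq_compl : A ∪ B = Sᶜ
  not_adj : ∀ a ∈ A, ∀ b ∈ B, ¬G.Adj a b

lemma exists_isSeparation_of_not_preconnected_induce {S : Finset V}
    (h : ¬(G.induce ((S : Set V)ᶜ)).Preconnected) : ∃ A B, IsSeparation G S A B := by
  classical
  obtain ⟨C, ⟨x, hx⟩, ⟨y, hy⟩, hC⟩ := exists_set_not_adj_of_not_preconnected h
  let P : V → Prop := fun v ↦ v ∈ Subtype.val '' C
  have hP (v : ((S : Set V)ᶜ : Set V)) : P v ↔ v ∈ C := Subtype.val_injective.mem_set_image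
  have hmem {v : V} (hv : v ∈ Sᶜ) : v ∈ (S : Set V)ᶜ := by simpa using hv
  refine ⟨{v ∈ Sᶜ | P v}, {v ∈ Sᶜ | ¬P v}, ?_, ?_, disjoint_filter_filter_not _ _ _,
    filter_union_filter_not_eq _ _, ?_⟩
  · exact ⟨x, mem_filter.mpr ⟨mem_compl.mpr x.2, (hP x).mpr hx⟩⟩
  · exact ⟨y, mem_filter.mpr ⟨mem_compl.mpr y.2, (hP y).not.mpr hy⟩⟩
  · intro a ha b hb hab
    rw [mem_filter] at ha hb
    exact hC ⟨a, hmem ha.1⟩ ((hP ⟨a, hmem ha.1⟩).mp ha.2) ⟨b, hmem hb.1⟩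
      ((hP ⟨b, hmem hb.1⟩).not.mp hb.2) hab

namespace IsSeparation

variable {S A B : Finset V}

lemma symm (h : IsSeparation G S A B) : IsSeparation G S B A where
  left_nonempty := h.right_nonempty
  right_nonempty := h.left_nonempty
  disjoint := h.disjoint.symm
  union_eq_compl := by rw [union_comm, h.union_eq_compl]
  not_adj b hb a ha hba := h.not_adj a ha b hb hba.symm

lemma card_add_card_add_card (h : IsSeparation G S A B) : #A + #B + #S = Fintype.card V := by
  rw [← card_union_of_disjoint h.disjoint, h.union_eq_compl, card_compl_add_card]

section Counting

variable [DecidableRel G.Adj]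

lemma dominates_filter_adj (h : IsSeparation G S A B) (hdiam : G.ediam ≤ 2) {a : V}
    (ha : a ∈ A) : Dominates G {s ∈ S | G.Adj a s} B := by
  intro b hb
  obtain ⟨s, has, hbs⟩ := exists_adj_adj_of_ediam_le_two hdiam
    (ne_of_mem_of_not_mem hb (disjoint_left.mp h.disjoint ha)).symm (h.not_adj a ha b hb)
  suffices s ∈ S from ⟨s, mem_filter.mpr ⟨this, has⟩, hbs.symm⟩
  by_contra hs
  rw [← mem_compl, ← h.union_eq_compl, mem_union] at hs
  rcases hs with hsA | hsB
  · exact h.not_adj s hsA b hb hbs.symm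
  · exact h.not_adj a ha s hsB has

lemma card_right_le_mul (h : IsSeparation G S A B) (h3 : G.CliqueFree 3) (hdiam : G.ediam ≤ 2)
    {a : V} (ha : a ∈ A) {I : Finset V} (hI : G.IsIndepSet I) (hIA : I ⊆ A) :
    #B ≤ #{s ∈ S | G.Adj a s} * (G.indepNum - #I) :=
  (h.dominates_filter_adj hdiam ha).card_le_mul fun s _ ↦ Nat.le_sub_of_add_le' <|
    card_add_card_filter_adj_le_indepNum h3 hI (disjoint_of_subset_left hIA h.disjoint)
      (fun x hx ↦ h.not_adj x (hIA hx)) s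

lemma two_mul_card_right_le_mul (h : IsSeparation G S A B) (h3 : G.CliqueFree 3)
    (hdiam : G.ediam ≤ 2) (hA : G.IsIndepSet A) {a : V} (ha : a ∈ A) :
    2 * #B ≤ #{s ∈ S | G.Adj a s} * (2 * G.indepNum + 1 - #A - #{s ∈ S | G.Adj a s}) := by
  refine (h.dominates_filter_adj hdiam ha).two_mul_card_le_mul fun t ht ↦ ?_
  have hnbrs := card_add_card_filter_adj_le_indepNum h3 hA h.disjoint h.not_adj t
  have hpriv := card_isPrivateNeighbor_add_card_le h3
    (isIndepSet_of_forall_adj h3 fun s hs ↦ (mem_filter.mp hs).2) B ht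
  lia

lemma two_mul_card_add_card_le (h : IsSeparation G S A B) (h3 : G.CliqueFree 3)
    (hdiam : G.ediam ≤ 2) (hA : G.IsIndepSet A) {a : V} (ha : a ∈ A) :
    2 * (#A + #B) ≤ #{s ∈ S | G.Adj a s} * (2 * G.indepNum - #{s ∈ S | G.Adj a s}) + 2 := by
  set T := {s ∈ S | G.Adj a s}
  have hsingle : #B ≤ #T * (G.indepNum - #A) := h.card_right_le_mul h3 hdiam ha hA subset_rfl
  have hdouble : 2 * #B ≤ #T * (2 * G.indepNum + 1 - #A - #T) :=
    h.two_mul_card_right_le_mul h3 hdiam hA ha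
  have hAα : #A ≤ G.indepNum := hA.card_le_indepNum
  have hTα : #T ≤ G.indepNum :=
    (isIndepSet_of_forall_adj h3 fun s hs ↦ (mem_filter.mp hs).2 : G.IsIndepSet T).card_le_indepNum
  have hApos : 0 < #A := card_pos.mpr h.left_nonempty
  have hBpos : 0 < #B := card_pos.mpr h.right_nonempty
  have hTpos : 0 < #T := Nat.pos_of_mul_pos_right (hBpos.trans_le hsingle)
  obtain hT | hT : #T = 1 ∨ 2 ≤ #T := by lia
  · rw [hT] at hsingle ⊢
    lia
  · have hsub : 2 * G.indepNum - #T = 2 * G.indepNum + 1 - #A - #T + (#A - 1) := by lia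
    calc
      2 * (#A + #B) = 2 * #B + 2 * (#A - 1) + 2 := by lia
      _ ≤ #T * (2 * G.indepNum + 1 - #A - #T) + #T * (#A - 1) + 2 := by gcongr
      _ = #T * (2 * G.indepNum - #T) + 2 := by rw [hsub, mul_add]

end Counting

lemma isIndepSet_left (h : IsSeparation G S A B) (h3 : G.CliqueFree 3) (hdiam : G.ediam ≤ 2)
    (hB : #S / 2 * (G.indepNum - 1) < #B) : G.IsIndepSet A := by
  classical
  have hlarge {a : V} (ha : a ∈ A) : #S / 2 < #{s ∈ S | G.Adj a s} := by
    have hle := h.card_right_le_mul h3 hdiam ha (I := {a}) (by simp) (by simpa using ha)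
    rw [card_singleton] at hle
    exact lt_of_mul_lt_mul_right (hB.trans_le hle) (Nat.zero_le _)
  intro x hx y hy _ hxy
  have hdisj : Disjoint {s ∈ S | G.Adj x s} {s ∈ S | G.Adj y s} :=
    disjoint_filter.mpr fun s _ hxs hys ↦
      h3 {x, y, s} (SimpleGraph.is3Clique_triple_iff.mpr ⟨hxy, hxs, hys⟩)
  have hcard : #{s ∈ S | G.Adj x s} + #{s ∈ S | G.Adj y s} ≤ #S := by
    rw [← card_union_of_disjoint hdisj]
    exact card_le_card (union_subset (filter_subset _ _) (filter_subset _ _))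
  have hx' := hlarge hx
  have hy' := hlarge hy
  lia

end IsSeparation

lemma not_isSeparation_of_card_le {k c : ℕ} (hck : c ≤ k)
    (h3 : G.CliqueFree 3) (hα : G.indepNum ≤ k) (hdiam : G.ediam ≤ 2)
    (hn₁ : c + 2 * (c / 2 * (k - 1)) < Fintype.card V)
    (hn₂ : 2 * c + c * (2 * k - c) + 2 < 2 * Fintype.card V)
    {S A B : Finset V} (hS : #S ≤ c) : ¬IsSeparation G S A B := by
  classical
  intro h
  wlog hAB : #A ≤ #B generalizing A B
  · exact this h.symm (le_of_not_ge hAB)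
  have hcard := h.card_add_card_add_card
  have hB : #S / 2 * (G.indepNum - 1) < #B :=
    calc
      #S / 2 * (G.indepNum - 1) ≤ c / 2 * (k - 1) := by gcongr
      _ < #B := by lia
  obtain ⟨a, ha⟩ := h.left_nonempty
  have hsum := h.two_mul_card_add_card_le h3 hdiam (h.isIndepSet_left h3 hdiam hB) ha
  have hmono := mul_two_mul_sub_le_mul_two_mul_sub
    ((card_filter_le S (G.Adj a)).trans hS) hα hck
  lia

end Separations

/-- The bound `hn₁` makes the smaller side of a separation independent, and `hn₂` contradicts the
double count. For `k = 9` and `c = 5` they require more than 37 and more than 38 vertices. -/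
theorem stmt_17_general [Fintype V] {k c : ℕ} (hck : c ≤ k)
    (h3 : G.CliqueFree 3) (hk : Gᶜ.CliqueFree (k + 1)) (hdiam : G.ediam ≤ 2)
    (hn₁ : c + 2 * (c / 2 * (k - 1)) < Fintype.card V)
    (hn₂ : 2 * c + c * (2 * k - c) + 2 < 2 * Fintype.card V)
    (S : Finset V) (hS : #S ≤ c) : (G.induce ((S : Set V)ᶜ)).Connected := by
  classical
  have hα : G.indepNum ≤ k := Nat.le_of_lt_succ (indepNum_lt_of_cliqueFree_compl hk)
  obtain ⟨v, -, hv⟩ : ∃ v ∈ univ, v ∉ S :=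
    exists_mem_notMem_of_card_lt_card (by rw [card_univ]; lia)
  refine (SimpleGraph.connected_iff _).mpr ⟨?_, ⟨v, hv⟩⟩
  by_contra hpre
  obtain ⟨A, B, hsep⟩ := exists_isSeparation_of_not_preconnected_induce hpre
  exact not_isSeparation_of_card_le hck h3 hα hdiam hn₁ hn₂ hS hsep

/-- A (3,10,40)-graph of diameter 2 has vertex connectivity at least 6:
deleting any set of at most 5 vertices leaves a connected graph. -/
theorem stmt_17 (Ω : SimpleGraph (Fin 40)) [DecidableRel Ω.Adj]
    (h3 : Ω.CliqueFree 3) (h10 : Ωᶜ.CliqueFree 10)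
    (hdiam : Ω.diam = 2) :
    ∀ S : Finset (Fin 40), S.card ≤ 5 →
      (Ω.induce ((↑S : Set (Fin 40))ᶜ)).Connected :=
  stmt_17_general (by decide) h3 h10
    (by rw [ediam_eq_diam_of_diam_ne_zero (by lia), hdiam]; rfl) (by simp) (by simp)
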